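/- arXiv:2310.01757 — 3 statements merged into one kernel-verified Lean document; each statement's English description precedes it below -/
import Mathlib

section
/- For all i, j ≤ ℓ with i ≠ j, the cAr directions are A⁴-conjugate: p_iᵀA⁴p_j = 0. -/
open Matrix

/-!
The cAr iteration is the conjugate gradient method for the operator `A` in the inner product
`⟨u, v⟩ = uᵀA³v`: there `A` is self-adjoint, `ρ_k = ⟨r_k, r_k⟩`, and
`‖A²p_k‖² = p_kᵀA⁴p_k = ⟨p_k, A p_k⟩`. Hence `A⁴`-conjugacy is the usual conjugacy of the search
directions. It is proved together with `⟨r_k, p_i⟩ = 0` for `i < k` by induction on `k`.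
If `ρ_k ≠ 0`, then `⟨r_k, p_k⟩ = ρ_k ≠ 0`, so `A²p_k ≠ 0` and neither `α_k` nor `β_k` has
denominator zero.
-/

/-- The conjugate gradient method for an operator `T`, with orthogonality measured by a bilinear
form `B`: residuals `r`, search directions `p`, step sizes `α` and update coefficients `β`.
The iteration is not stopped when it terminates or breaks down: a quotient with denominator zero
then has the junk value zero. -/
structure IsConjugateGradient {K V : Type*} [Field K] [AddCommGroup V] [Module K V]
    (B : LinearMap.BilinForm K V) (T : Module.End K V) (r p : ℕ → V) (α β : ℕ → K) : Prop where
  direction_zero : p 0 = r 0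
  stepSize_eq : ∀ k, α k = B (r k) (r k) / B (p k) (T (p k))
  residual_succ : ∀ k, r (k + 1) = r k - α k • T (p k)
  coeff_eq : ∀ k, β k = B (r (k + 1)) (r (k + 1)) / B (r k) (r k)
  direction_succ : ∀ k, p (k + 1) = r (k + 1) + β k • p k

namespace IsConjugateGradient

variable {K V : Type*} [Field K] [AddCommGroup V] [Module K V] {B : LinearMap.BilinForm K V}
  {T : Module.End K V} {r p : ℕ → V} {α β : ℕ → K} {k ℓ : ℕ}

theorem residual_direction_self (h : IsConjugateGradient B T r p α β)
    (hrp : ∀ i < k, B (r k) (p i) = 0) : B (r k) (p k) = B (r k) (r k) := by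
  cases k with
  | zero => rw [h.direction_zero]
  | succ k => simp [h.direction_succ k, hrp k k.lt_succ_self]

theorem residual_residual_eq_zero (h : IsConjugateGradient B T r p α β)
    (hrp : ∀ i < k, B (r k) (p i) = 0) {i : ℕ} (hi : i < k) : B (r k) (r i) = 0 := by
  cases i with
  | zero => rw [← h.direction_zero, hrp 0 hi]
  | succ i =>
    have hri : r (i + 1) = p (i + 1) - β i • p i := eq_sub_of_add_eq (h.direction_succ i).symm
    simp [hri, hrp (i + 1) hi, hrp i (by lia)]

theorem residual_succ_direction_eq_zero (h : IsConjugateGradient B T r p α β)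
    (hT : B.IsSelfAdjoint T) (hpTp : B (p k) (T (p k)) ≠ 0)
    (hrp : ∀ i < k, B (r k) (p i) = 0) (hconj : ∀ i < k, B (p k) (T (p i)) = 0)
    {i : ℕ} (hi : i < k + 1) : B (r (k + 1)) (p i) = 0 := by
  have expand : B (r (k + 1)) (p i) = B (r k) (p i) - α k * B (p k) (T (p i)) := by
    simp [h.residual_succ k, hT (p k) (p i)]
  rcases Nat.lt_succ_iff_lt_or_eq.mp hi with hik | rfl
  · simp [expand, hrp i hik, hconj i hik]
  · rw [expand, h.residual_direction_self hrp, h.stepSize_eq, div_mul_cancel₀ _ hpTp, sub_self]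

theorem direction_succ_conjugate (h : IsConjugateGradient B T r p α β)
    (hrr : ∀ i ≤ k, B (r i) (r i) ≠ 0) (hpTp : ∀ i ≤ k, B (p i) (T (p i)) ≠ 0)
    (hrp : ∀ i < k + 1, B (r (k + 1)) (p i) = 0) (hconj : ∀ i < k, B (p k) (T (p i)) = 0)
    {i : ℕ} (hi : i < k + 1) : B (p (k + 1)) (T (p i)) = 0 := by
  have hik : i ≤ k := Nat.le_of_lt_succ hi
  have stepSize_ne_zero : α i ≠ 0 := by
    rw [h.stepSize_eq]
    exact div_ne_zero (hrr i hik) (hpTp i hik)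
  have expand : B (p (k + 1)) (T (p i)) = B (r (k + 1)) (T (p i)) + β k * B (p k) (T (p i)) := by
    simp [h.direction_succ k]
  -- `α i • T (p i) = r i - r (i + 1)`, and `r (k + 1)` is orthogonal to all earlier residuals.
  have residual_image : α i * B (r (k + 1)) (T (p i)) = -B (r (k + 1)) (r (i + 1)) := by
    simp [h.residual_succ i, h.residual_residual_eq_zero hrp hi]
  apply (mul_eq_zero_iff_left stepSize_ne_zero).mp
  rw [expand, mul_add, residual_image]
  rcases hik.lt_or_eq with hlt | rfl
  · simp [hconj i hlt, h.residual_residual_eq_zero hrp (Nat.succ_lt_succ hlt)]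
  · rw [h.stepSize_eq, h.coeff_eq]
    field_simp [hrr i le_rfl, hpTp i le_rfl]
    ring

theorem orthogonal_and_conjugate (h : IsConjugateGradient B T r p α β)
    (hT : B.IsSelfAdjoint T) (hker : ∀ u v, B v (T v) = 0 → B u v = 0)
    (hrr : ∀ k < ℓ, B (r k) (r k) ≠ 0) (hk : k ≤ ℓ) :
    (∀ i < k, B (r k) (p i) = 0) ∧ ∀ i < k, B (p k) (T (p i)) = 0 := by
  induction k using Nat.strong_induction_on with
  | h k ih =>
    cases k with
    | zero => simp
    | succ k =>
      have hpTp : ∀ i ≤ k, B (p i) (T (p i)) ≠ 0 := fun i hi hzero ↦ by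
        have hrp := (ih i (by lia) (by lia)).1
        exact hrr i (by lia) (h.residual_direction_self hrp ▸ hker (r i) (p i) hzero)
      obtain ⟨hrp, hconj⟩ := ih k (by lia) (by lia)
      have hrp_succ : ∀ i < k + 1, B (r (k + 1)) (p i) = 0 := fun i hi ↦
        h.residual_succ_direction_eq_zero hT (hpTp k le_rfl) hrp hconj hi
      exact ⟨hrp_succ, fun i hi ↦
        h.direction_succ_conjugate (fun j hj ↦ hrr j (by lia)) hpTp hrp_succ hconj hi⟩

theorem conjugate_of_ne (h : IsConjugateGradient B T r p α β) (hB : B.IsSymm)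
    (hT : B.IsSelfAdjoint T) (hker : ∀ u v, B v (T v) = 0 → B u v = 0)
    (hrr : ∀ k < ℓ, B (r k) (r k) ≠ 0) {i j : ℕ} (hi : i ≤ ℓ) (hj : j ≤ ℓ) (hij : i ≠ j) :
    B (p i) (T (p j)) = 0 := by
  rcases hij.lt_or_gt with hlt | hgt
  · rw [← hT, hB.eq]
    exact (h.orthogonal_and_conjugate hT hker hrr hj).2 i hlt
  · exact (h.orthogonal_and_conjugate hT hker hrr hi).2 j hgt

end IsConjugateGradient

section SymmetricPowers

variable {ι K : Type*} [Fintype ι] [DecidableEq ι] {A : Matrix ι ι K}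

theorem dotProduct_pow_add_mulVec [CommSemiring K] (hA : A.IsSymm) (m k : ℕ) (u v : ι → K) :
    u ⬝ᵥ (A ^ (m + k)) *ᵥ v = (A ^ m) *ᵥ u ⬝ᵥ (A ^ k) *ᵥ v := by
  rw [pow_add, ← mulVec_mulVec, dotProduct_mulVec, ← mulVec_transpose, (hA.pow m).eq]

theorem toBilin'_pow_toLin'_right [CommSemiring K] (m : ℕ) (u v : ι → K) :
    toBilin' (A ^ m) u (toLin' A v) = u ⬝ᵥ (A ^ (m + 1)) *ᵥ v := by
  rw [toBilin'_apply', toLin'_apply, mulVec_mulVec, ← pow_succ]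

theorem isSelfAdjoint_toBilin'_pow_toLin' [CommSemiring K] (hA : A.IsSymm) (m : ℕ) :
    (toBilin' (A ^ m)).IsSelfAdjoint (toLin' A) := fun u v ↦ by
  have expand := dotProduct_pow_add_mulVec hA 1 m u v
  rw [toBilin'_pow_toLin'_right, toBilin'_apply', toLin'_apply, add_comm, expand, pow_one]

theorem pow_mulVec_eq_zero_of_dotProduct [CommRing K] [LinearOrder K] [IsStrictOrderedRing K]
    (hA : A.IsSymm) {m : ℕ} {v : ι → K} (hv : v ⬝ᵥ (A ^ (m + m)) *ᵥ v = 0) :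
    (A ^ m) *ᵥ v = 0 := by
  rwa [dotProduct_pow_add_mulVec hA, dotProduct_self_eq_zero] at hv

end SymmetricPowers

open scoped ComplexOrder in
theorem posDef_pow {ι 𝕜 : Type*} [Fintype ι] [DecidableEq ι] [RCLike 𝕜] {A : Matrix ι ι 𝕜}
    (hA : A.PosDef) (m : ℕ) : (A ^ m).PosDef :=
  (hA.posSemidef.pow m).posDef_iff_isUnit.mpr (hA.isUnit.pow m)

theorem car_directions_A4_conjugate_general {ι K : Type*} [Fintype ι] [DecidableEq ι]
    [Field K] [LinearOrder K] [IsStrictOrderedRing K] {A : Matrix ι ι K} (hA : A.IsSymm)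
    {r p : ℕ → ι → K} {ρ α β : ℕ → K} {ℓ : ℕ} (hp0 : p 0 = r 0)
    (hρ : ∀ k, ρ k = r k ⬝ᵥ (A ^ 3) *ᵥ r k)
    (hα : ∀ k, α k = ρ k / ((A ^ 2) *ᵥ p k ⬝ᵥ (A ^ 2) *ᵥ p k))
    (hr : ∀ k, r (k + 1) = r k - α k • A *ᵥ p k)
    (hβ : ∀ k, β k = ρ (k + 1) / ρ k)
    (hp : ∀ k, p (k + 1) = r (k + 1) + β k • p k)
    (hρ_ne : ∀ k < ℓ, ρ k ≠ 0) :
    ∀ i ≤ ℓ, ∀ j ≤ ℓ, i ≠ j → p i ⬝ᵥ (A ^ 4) *ᵥ p j = 0 := by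
  have hρB : ∀ k, toBilin' (A ^ 3) (r k) (r k) = ρ k := fun k ↦ by rw [toBilin'_apply', hρ]
  have hcg : IsConjugateGradient (toBilin' (A ^ 3)) (toLin' A) r p α β :=
    { direction_zero := hp0
      stepSize_eq k := by
        rw [hα, hρB, toBilin'_pow_toLin'_right, ← dotProduct_pow_add_mulVec hA 2 2]
      residual_succ := hr
      coeff_eq k := by rw [hβ, hρB, hρB]
      direction_succ := hp }
  have hker : ∀ u v, toBilin' (A ^ 3) v (toLin' A v) = 0 → toBilin' (A ^ 3) u v = 0 := by
    intro u v hv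
    rw [toBilin'_pow_toLin'_right] at hv
    have hAAv : (A ^ 2) *ᵥ v = 0 := pow_mulVec_eq_zero_of_dotProduct hA hv
    rw [toBilin'_apply', dotProduct_pow_add_mulVec hA 1 2, hAAv, dotProduct_zero]
  intro i hi j hj hij
  rw [← toBilin'_pow_toLin'_right]
  exact hcg.conjugate_of_ne (isSymm_toBilin'_iff_isSymm.mpr (hA.pow 3))
    (isSelfAdjoint_toBilin'_pow_toLin' hA 3) hker (fun k hk ↦ by rw [hρB]; exact hρ_ne k hk)
    hi hj hij

/-- Paper: Theorem 6.3(a).  cAr iteration for SPD `A` (with `ρ_k = r_kᵀA³r_k`,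
`α_k = ρ_k/‖A²p_k‖²`, `β_k = ρ_{k+1}/ρ_k`), terminating at step `ℓ ≤ n`
(`r_k ≠ 0` for `k < ℓ` and `r_ℓ = 0`):  the directions are `A⁴`-conjugate: `p_iᵀ A⁴ p_j = 0` for `i ≠ j`. -/
theorem car_directions_A4_conjugate (n ℓ : ℕ) (hℓn : ℓ ≤ n)
    (A : Matrix (Fin n) (Fin n) ℝ) (hA : A.PosDef) (b : Fin n → ℝ)
    (x r p : ℕ → (Fin n → ℝ)) (ρ α β : ℕ → ℝ)
    (hx0 : x 0 = 0) (hr0 : r 0 = b) (hp0 : p 0 = b)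
    (hρ : ∀ k, ρ k = r k ⬝ᵥ (A ^ 3).mulVec (r k))
    (hα : ∀ k, α k = ρ k / ((A ^ 2).mulVec (p k) ⬝ᵥ (A ^ 2).mulVec (p k)))
    (hx : ∀ k, x (k + 1) = x k + α k • p k)
    (hr : ∀ k, r (k + 1) = r k - α k • A.mulVec (p k))
    (hβ : ∀ k, β k = ρ (k + 1) / ρ k)
    (hp : ∀ k, p (k + 1) = r (k + 1) + β k • p k)
    (hne : ∀ k < ℓ, r k ≠ 0) (hfin : r ℓ = 0) :
    ∀ i ≤ ℓ, ∀ j ≤ ℓ, i ≠ j → p i ⬝ᵥ (A ^ 4).mulVec (p j) = 0 := by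
  exact car_directions_A4_conjugate_general (isHermitian_iff_isSymm.mp hA.isHermitian)
    (hp0.trans hr0.symm) hρ hα hr hβ hp fun k hk ↦
      hρ k ▸ ((posDef_pow hA 3).dotProduct_mulVec_pos (hne k hk)).ne'
end

section
/- For all i, j ≤ ℓ, the cAr iterates satisfy x_iᵀp_j ≥ 0. -/
open Matrix

/-!
cAr is the conjugate gradient iteration for `A` in the inner product `⟨u, v⟩ = uᵀA³v`, so its
directions are conjugate: `p_iᵀA⁴p_j = 0` for `i ≠ j`, and hence `p_iᵀA⁴p_j ≥ 0` for all `i`, `j`.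
Powers of `A` can then be stripped off one at a time. Since `r_ℓ = 0`, every residual is
`r_k = α_k A p_k + ⋯ + α_{ℓ-1} A p_{ℓ-1}`, and every `p_k` is a nonnegative combination of
residuals, so a linear functional that is nonnegative on all `A p_k` is nonnegative on all `p_k`.
Four such steps give `p_iᵀp_j ≥ 0`, and `x_i` is a nonnegative combination of directions.
-/

section

variable {K V : Type*} [Field K] [AddCommGroup V] [Module K V]

/-- The first `ℓ` steps of the conjugate gradient iteration for the operator `T` in the inner
product `B`, started at `x 0 = 0`, with iterates `x`, residuals `r` and directions `p`. The
residuals before step `ℓ` are nonzero, so for positive definite `T` no division is by zero. The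
choice `B u v = uᵀT³v` gives cAr. -/
structure IsConjGrad (B : LinearMap.BilinForm K V) (T : Module.End K V) (ℓ : ℕ)
    (x r p : ℕ → V) (α β : ℕ → K) : Prop where
  x_zero : x 0 = 0
  p_zero : p 0 = r 0
  r_ne_zero : ∀ k < ℓ, r k ≠ 0
  alpha_eq : ∀ k < ℓ, α k = B (r k) (r k) / B (p k) (T (p k))
  x_succ : ∀ k < ℓ, x (k + 1) = x k + α k • p k
  r_succ : ∀ k < ℓ, r (k + 1) = r k - α k • T (p k)
  beta_eq : ∀ k < ℓ, β k = B (r (k + 1)) (r (k + 1)) / B (r k) (r k)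
  p_succ : ∀ k < ℓ, p (k + 1) = r (k + 1) + β k • p k

variable {B : LinearMap.BilinForm K V} {T : Module.End K V} {ℓ : ℕ} {x r p : ℕ → V}
  {α β : ℕ → K}

namespace IsConjGrad

theorem map_r_eq_zero_of_map_p_eq_zero (h : IsConjGrad B T ℓ x r p α β) (f : Module.Dual K V)
    {k : ℕ} (hk : k ≤ ℓ) (hf : ∀ i ≤ k, f (p i) = 0) : f (r k) = 0 := by
  cases k with
  | zero => rw [← h.p_zero, hf 0 le_rfl]
  | succ k =>
    have hr : r (k + 1) = p (k + 1) - β k • p k := by rw [h.p_succ k hk, add_sub_cancel_right]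
    rw [hr, map_sub, map_smul, hf _ le_rfl, hf k k.le_succ, smul_zero, sub_zero]

theorem apply_p_succ (h : IsConjGrad B T ℓ x r p α β) {k : ℕ} (hk : k < ℓ) (v : V) :
    B (p (k + 1)) v = B (r (k + 1)) v + β k * B (p k) v := by
  simp [h.p_succ k hk]

theorem alpha_mul_apply_p (h : IsConjGrad B T ℓ x r p α β) {k : ℕ} (hk : k < ℓ) (v : V) :
    α k * B v (T (p k)) = B v (r k) - B v (r (k + 1)) := by
  simp [h.r_succ k hk]

end IsConjGrad

variable [LinearOrder K]

/-- `B` is an inner product on `V`, and `T` is self-adjoint and positive definite for it. -/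
structure IsPosDefSelfAdjoint (B : LinearMap.BilinForm K V) (T : Module.End K V) : Prop where
  symm : ∀ u v, B u v = B v u
  pos : ∀ u, u ≠ 0 → 0 < B u u
  selfAdjoint : ∀ u v, B (T u) v = B u (T v)
  apply_pos : ∀ u, u ≠ 0 → 0 < B u (T u)

namespace IsPosDefSelfAdjoint

theorem self_nonneg (hT : IsPosDefSelfAdjoint B T) (u : V) : 0 ≤ B u u := by
  rcases eq_or_ne u 0 with rfl | hu
  · simp
  · exact (hT.pos u hu).le

theorem compRight (hT : IsPosDefSelfAdjoint B T) : IsPosDefSelfAdjoint (B.compRight T) T where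
  symm u v := by
    simp only [LinearMap.BilinForm.compRight_apply]
    rw [← hT.selfAdjoint, hT.symm]
  pos := hT.apply_pos
  selfAdjoint u v := hT.selfAdjoint u (T v)
  apply_pos u hu := by
    have hTu : T u ≠ 0 := fun h ↦ (hT.apply_pos u hu).ne' (by rw [h, map_zero])
    simpa only [LinearMap.BilinForm.compRight_apply, hT.selfAdjoint] using hT.pos (T u) hTu

theorem compRight_pow (hT : IsPosDefSelfAdjoint B T) (m : ℕ) :
    IsPosDefSelfAdjoint (B.compRight (T ^ m)) T := by
  induction m with
  | zero => exact hT
  | succ m ih => exact pow_succ T m ▸ ih.compRight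

end IsPosDefSelfAdjoint

namespace IsConjGrad

theorem apply_r_succ (h : IsConjGrad B T ℓ x r p α β) (hT : IsPosDefSelfAdjoint B T)
    {k : ℕ} (hk : k < ℓ) (v : V) : B (r (k + 1)) v = B (r k) v - α k * B (p k) (T v) := by
  simp [h.r_succ k hk, hT.selfAdjoint]

theorem alpha_mul_of_apply_r_p (h : IsConjGrad B T ℓ x r p α β) (hT : IsPosDefSelfAdjoint B T)
    {k : ℕ} (hk : k < ℓ) (hrp : B (r k) (p k) = B (r k) (r k)) :
    α k * B (p k) (T (p k)) = B (r k) (r k) := by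
  have hp : p k ≠ 0 := fun hp ↦
    (hT.pos (r k) (h.r_ne_zero k hk)).ne' (by rw [← hrp, hp, map_zero])
  rw [h.alpha_eq k hk, div_mul_cancel₀ _ (hT.apply_pos (p k) hp).ne']

theorem apply_r_p (h : IsConjGrad B T ℓ x r p α β) (hT : IsPosDefSelfAdjoint B T)
    {k : ℕ} (hk : k ≤ ℓ) : B (r k) (p k) = B (r k) (r k) := by
  induction k with
  | zero => rw [h.p_zero]
  | succ k ih =>
    have hrp := ih (Nat.le_of_succ_le hk)
    have horth : B (r (k + 1)) (p k) = 0 := by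
      rw [h.apply_r_succ hT hk, hrp, h.alpha_mul_of_apply_r_p hT hk hrp, sub_self]
    rw [h.p_succ k hk, map_add, map_smul, horth, smul_zero, add_zero]

theorem alpha_mul (h : IsConjGrad B T ℓ x r p α β) (hT : IsPosDefSelfAdjoint B T)
    {k : ℕ} (hk : k < ℓ) : α k * B (p k) (T (p k)) = B (r k) (r k) :=
  h.alpha_mul_of_apply_r_p hT hk (h.apply_r_p hT hk.le)

theorem beta_mul (h : IsConjGrad B T ℓ x r p α β) (hT : IsPosDefSelfAdjoint B T)
    {k : ℕ} (hk : k < ℓ) : β k * B (r k) (r k) = B (r (k + 1)) (r (k + 1)) := by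
  rw [h.beta_eq k hk, div_mul_cancel₀ _ (hT.pos (r k) (h.r_ne_zero k hk)).ne']

theorem alpha_ne_zero (h : IsConjGrad B T ℓ x r p α β) (hT : IsPosDefSelfAdjoint B T)
    {k : ℕ} (hk : k < ℓ) : α k ≠ 0 := fun hα ↦
  (hT.pos (r k) (h.r_ne_zero k hk)).ne' (by rw [← h.alpha_mul hT hk, hα, zero_mul])

theorem apply_r_succ_p_eq_zero (h : IsConjGrad B T ℓ x r p α β) (hT : IsPosDefSelfAdjoint B T)
    {k : ℕ} (hk : k < ℓ) (horth : ∀ i < k, B (r k) (p i) = 0)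
    (hconj : ∀ i < k, B (p k) (T (p i)) = 0) {i : ℕ} (hi : i ≤ k) : B (r (k + 1)) (p i) = 0 := by
  rw [h.apply_r_succ hT hk]
  rcases hi.lt_or_eq with hik | rfl
  · rw [horth i hik, hconj i hik, mul_zero, sub_zero]
  · rw [h.apply_r_p hT hk.le, h.alpha_mul hT hk, sub_self]

theorem apply_p_succ_p_eq_zero (h : IsConjGrad B T ℓ x r p α β) (hT : IsPosDefSelfAdjoint B T)
    {k : ℕ} (hk : k < ℓ) (horth : ∀ i ≤ k, B (r (k + 1)) (p i) = 0)
    (hconj : ∀ i < k, B (p k) (T (p i)) = 0) {i : ℕ} (hi : i ≤ k) :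
    B (p (k + 1)) (T (p i)) = 0 := by
  have horth_r : ∀ j ≤ k, B (r (k + 1)) (r j) = 0 := fun j hj ↦
    h.map_r_eq_zero_of_map_p_eq_zero _ (hj.trans hk.le) fun i hi ↦ horth i (hi.trans hj)
  have hrp : α i * B (r (k + 1)) (T (p i)) = -B (r (k + 1)) (r (i + 1)) := by
    rw [h.alpha_mul_apply_p (hi.trans_lt hk), horth_r i hi, zero_sub]
  refine (mul_eq_zero.mp ?_).resolve_left (h.alpha_ne_zero hT (hi.trans_lt hk))
  rw [h.apply_p_succ hk, mul_add, hrp]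
  rcases hi.lt_or_eq with hik | rfl
  · rw [horth_r (i + 1) hik, hconj i hik, mul_zero, mul_zero, neg_zero, zero_add]
  · rw [mul_left_comm, h.alpha_mul hT hk, h.beta_mul hT hk, neg_add_cancel]

theorem orthogonal_and_conjugate (h : IsConjGrad B T ℓ x r p α β)
    (hT : IsPosDefSelfAdjoint B T) {k : ℕ} (hk : k ≤ ℓ) :
    (∀ i < k, B (r k) (p i) = 0) ∧ ∀ i < k, B (p k) (T (p i)) = 0 := by
  induction k with
  | zero => simp
  | succ k ih =>
    obtain ⟨horth, hconj⟩ := ih (Nat.le_of_succ_le hk)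
    have horth_succ : ∀ i ≤ k, B (r (k + 1)) (p i) = 0 := fun i hi ↦
      h.apply_r_succ_p_eq_zero hT hk horth hconj hi
    exact ⟨fun i hi ↦ horth_succ i (Nat.le_of_lt_succ hi), fun i hi ↦
      h.apply_p_succ_p_eq_zero hT hk horth_succ hconj (Nat.le_of_lt_succ hi)⟩

theorem conjugate (h : IsConjGrad B T ℓ x r p α β) (hT : IsPosDefSelfAdjoint B T)
    {i j : ℕ} (hi : i ≤ ℓ) (hj : j ≤ ℓ) (hij : i ≠ j) : B (p i) (T (p j)) = 0 := by
  rcases hij.lt_or_gt with hlt | hgt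
  · rw [← hT.selfAdjoint, hT.symm, (h.orthogonal_and_conjugate hT hj).2 i hlt]
  · exact (h.orthogonal_and_conjugate hT hi).2 j hgt

theorem apply_p_nonneg (h : IsConjGrad B T ℓ x r p α β) (hT : IsPosDefSelfAdjoint B T)
    {i j : ℕ} (hi : i ≤ ℓ) (hj : j ≤ ℓ) : 0 ≤ B (p i) (T (p j)) := by
  rcases eq_or_ne i j with rfl | hij
  · exact hT.compRight.self_nonneg (p i)
  · exact (h.conjugate hT hi hj hij).ge

variable [IsStrictOrderedRing K]

theorem alpha_nonneg (h : IsConjGrad B T ℓ x r p α β) (hT : IsPosDefSelfAdjoint B T)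
    {k : ℕ} (hk : k < ℓ) : 0 ≤ α k :=
  h.alpha_eq k hk ▸ div_nonneg (hT.self_nonneg _) (hT.compRight.self_nonneg _)

theorem beta_nonneg (h : IsConjGrad B T ℓ x r p α β) (hT : IsPosDefSelfAdjoint B T)
    {k : ℕ} (hk : k < ℓ) : 0 ≤ β k :=
  h.beta_eq k hk ▸ div_nonneg (hT.self_nonneg _) (hT.self_nonneg _)

theorem map_r_nonneg (h : IsConjGrad B T ℓ x r p α β) (hT : IsPosDefSelfAdjoint B T)
    (hfin : r ℓ = 0) (f : Module.Dual K V) (hf : ∀ k ≤ ℓ, 0 ≤ f (T (p k)))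
    {k : ℕ} (hk : k ≤ ℓ) : 0 ≤ f (r k) := by
  induction hk using Nat.decreasingInduction with
  | self => rw [hfin, map_zero]
  | of_succ k hk ih =>
    have hr : r k = r (k + 1) + α k • T (p k) := by rw [h.r_succ k hk, sub_add_cancel]
    rw [hr, map_add, map_smul]
    exact add_nonneg ih (mul_nonneg (h.alpha_nonneg hT hk) (hf k hk.le))

theorem map_p_nonneg (h : IsConjGrad B T ℓ x r p α β) (hT : IsPosDefSelfAdjoint B T)
    (hfin : r ℓ = 0) (f : Module.Dual K V) (hf : ∀ k ≤ ℓ, 0 ≤ f (T (p k)))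
    {k : ℕ} (hk : k ≤ ℓ) : 0 ≤ f (p k) := by
  induction k with
  | zero => exact h.p_zero ▸ h.map_r_nonneg hT hfin f hf hk
  | succ k ih =>
    rw [h.p_succ k hk, map_add, map_smul]
    exact add_nonneg (h.map_r_nonneg hT hfin f hf hk)
      (mul_nonneg (h.beta_nonneg hT hk) (ih (Nat.le_of_succ_le hk)))

theorem map_p_nonneg_of_pow (h : IsConjGrad B T ℓ x r p α β) (hT : IsPosDefSelfAdjoint B T)
    (hfin : r ℓ = 0) (f : Module.Dual K V) (m : ℕ) (hf : ∀ k ≤ ℓ, 0 ≤ f ((T ^ m) (p k)))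
    {k : ℕ} (hk : k ≤ ℓ) : 0 ≤ f (p k) := by
  induction m with
  | zero => exact hf k hk
  | succ m ih =>
    refine ih fun j hj ↦ h.map_p_nonneg hT hfin (f ∘ₗ T ^ m) (fun i hi ↦ ?_) hj
    simpa only [pow_succ] using! hf i hi

theorem map_x_nonneg (h : IsConjGrad B T ℓ x r p α β) (hT : IsPosDefSelfAdjoint B T)
    (f : Module.Dual K V) (hf : ∀ k ≤ ℓ, 0 ≤ f (p k)) {k : ℕ} (hk : k ≤ ℓ) : 0 ≤ f (x k) := by
  induction k with
  | zero => rw [h.x_zero, map_zero]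
  | succ k ih =>
    have hkℓ := Nat.le_of_succ_le hk
    rw [h.x_succ k hk, map_add, map_smul]
    exact add_nonneg (ih hkℓ) (mul_nonneg (h.alpha_nonneg hT hk) (hf k hkℓ))

end IsConjGrad

theorem car_xp_nonneg_general [IsStrictOrderedRing K] {m : ℕ} (hT : IsPosDefSelfAdjoint B T)
    (h : IsConjGrad (B.compRight (T ^ m)) T ℓ x r p α β) (hfin : r ℓ = 0)
    {i j : ℕ} (hi : i ≤ ℓ) (hj : j ≤ ℓ) : 0 ≤ B (x i) (p j) := by
  have hTm := hT.compRight_pow m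
  have hpp : ∀ k ≤ ℓ, 0 ≤ B (p k) (p j) := fun k hk ↦
    h.map_p_nonneg_of_pow hTm hfin (B (p k)) (m + 1) (fun i hi ↦ by
      simpa only [pow_succ] using! h.apply_p_nonneg hTm hk hi) hj
  exact h.map_x_nonneg hTm (B.flip (p j)) hpp hi

end

section

variable {ι R : Type*} [Fintype ι] [DecidableEq ι] [CommSemiring R]

theorem isPosDefSelfAdjoint_dotProductBilin {A : Matrix ι ι ℝ} (hA : A.PosDef) :
    IsPosDefSelfAdjoint (dotProductBilin ℝ ℝ) (toLin' A) where
  symm := dotProduct_comm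
  pos u hu := by simpa using dotProduct_star_self_pos_iff.mpr hu
  selfAdjoint u v := by
    have hsymm : A.IsSymm := isHermitian_iff_isSymm.mp hA.isHermitian
    simp [dotProduct_mulVec, ← mulVec_transpose, hsymm.eq]
  apply_pos u hu := by simpa using hA.dotProduct_mulVec_pos hu

theorem dotProductBilin_compRight_pow_apply (A : Matrix ι ι R) (m : ℕ) (u v : ι → R) :
    LinearMap.BilinForm.compRight (dotProductBilin R R) (toLin' A ^ m) u v =
      u ⬝ᵥ (A ^ m).mulVec v := by
  rw [← toLin'_pow]
  rfl

theorem pow_mulVec_dotProduct_pow_mulVec {A : Matrix ι ι R} (hA : A.IsSymm) (k l : ℕ)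
    (u v : ι → R) : (A ^ k).mulVec u ⬝ᵥ (A ^ l).mulVec v = u ⬝ᵥ (A ^ (k + l)).mulVec v := by
  rw [← vecMul_transpose, transpose_pow, hA.eq, ← dotProduct_mulVec, mulVec_mulVec, pow_add]

end

/-- Paper: Theorem 6.3(j).  cAr iteration for SPD `A` (with `ρ_k = r_kᵀA³r_k`,
`α_k = ρ_k/‖A²p_k‖²`, `β_k = ρ_{k+1}/ρ_k`), terminating at step `ℓ ≤ n`
(`r_k ≠ 0` for `k < ℓ` and `r_ℓ = 0`):  the iterates satisfy `x_iᵀ p_j ≥ 0`. -/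
theorem car_xp_nonneg (n ℓ : ℕ) (hℓn : ℓ ≤ n)
    (A : Matrix (Fin n) (Fin n) ℝ) (hA : A.PosDef) (b : Fin n → ℝ)
    (x r p : ℕ → (Fin n → ℝ)) (ρ α β : ℕ → ℝ)
    (hx0 : x 0 = 0) (hr0 : r 0 = b) (hp0 : p 0 = b)
    (hρ : ∀ k, ρ k = r k ⬝ᵥ (A ^ 3).mulVec (r k))
    (hα : ∀ k, α k = ρ k / ((A ^ 2).mulVec (p k) ⬝ᵥ (A ^ 2).mulVec (p k)))
    (hx : ∀ k, x (k + 1) = x k + α k • p k)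
    (hr : ∀ k, r (k + 1) = r k - α k • A.mulVec (p k))
    (hβ : ∀ k, β k = ρ (k + 1) / ρ k)
    (hp : ∀ k, p (k + 1) = r (k + 1) + β k • p k)
    (hne : ∀ k < ℓ, r k ≠ 0) (hfin : r ℓ = 0) :
    ∀ i ≤ ℓ, ∀ j ≤ ℓ, 0 ≤ x i ⬝ᵥ p j := by
  have hsymm : A.IsSymm := isHermitian_iff_isSymm.mp hA.isHermitian
  have h : IsConjGrad (LinearMap.BilinForm.compRight (dotProductBilin ℝ ℝ) (toLin' A ^ 3))
      (toLin' A) ℓ x r p α β :=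
    { x_zero := hx0
      p_zero := hp0.trans hr0.symm
      r_ne_zero := hne
      alpha_eq := fun k _ ↦ by
        rw [hα, hρ, pow_mulVec_dotProduct_pow_mulVec hsymm, dotProductBilin_compRight_pow_apply,
          dotProductBilin_compRight_pow_apply, toLin'_apply, mulVec_mulVec, ← pow_succ]
      x_succ := fun k _ ↦ hx k
      r_succ := fun k _ ↦ hr k
      beta_eq := fun k _ ↦ by
        rw [hβ, hρ, hρ, dotProductBilin_compRight_pow_apply, dotProductBilin_compRight_pow_apply]
      p_succ := fun k _ ↦ hp k }
  exact fun i hi j hj ↦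
    car_xp_nonneg_general (isPosDefSelfAdjoint_dotProductBilin hA) h hfin hi hj
end

section
/- For all i, j ≤ ℓ, the cAr residuals and directions satisfy r_iᵀAp_j ≥ 0. -/
open Matrix

/-!
The cAr iteration is the conjugate gradient iteration for the bilinear form `C(u, v) = uᵀA³v`: the
residuals are `C`-orthogonal to the earlier directions and the directions are mutually conjugate for
`C(·, A ·)`. Hence `C(r_i, p_j)` is `0` for `j < i` and `β_{j-1} ⋯ β_i ρ_i ≥ 0` for `j ≥ i`.

Powers of `A` are then removed one at a time. Each `p_i` is a nonnegative combination of residuals,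
and since `r_ℓ = 0`, unrolling the recurrence from the end gives `r_i = ∑ α_k A p_k` over
`i ≤ k < ℓ`. So a linear functional that is nonnegative on every `A r_i` is nonnegative on every
`r_i`; doing this twice leads from `r_iᵀA³p_j ≥ 0` to `r_iᵀA p_j ≥ 0`.
-/

open LinearMap (BilinForm)

section BilinForm

variable {R M : Type*} [CommRing R] [AddCommGroup M] [Module R M]
  {B : BilinForm R M} {A : Module.End R M}

lemma isSelfAdjoint_pow (hA : B.IsSelfAdjoint A) (m : ℕ) :
    B.IsSelfAdjoint (A ^ m : Module.End R M) := by
  induction m with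
  | zero => exact fun _ _ => rfl
  | succ m ih =>
    intro u v
    rw [pow_succ, Module.End.mul_apply, ih (A u), hA u, ← Module.End.mul_apply,
      (Commute.self_pow A m).eq]

lemma isSymm_compRight (hB : B.IsSymm) (hA : B.IsSelfAdjoint A) : (B.compRight A).IsSymm :=
  ⟨fun u v => by simp only [BilinForm.compRight_apply, hB.eq u, hA v u]⟩

lemma isSelfAdjoint_compRight_pow (hA : B.IsSelfAdjoint A) (m : ℕ) :
    (B.compRight (A ^ m)).IsSelfAdjoint A := fun u v => by
  simp only [BilinForm.compRight_apply, hA u, ← Module.End.mul_apply, ← pow_succ, ← pow_succ']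

end BilinForm

section ConjugateGradient

variable {K E : Type*} [Field K] [AddCommGroup E] [Module K E]

/-- The sequences of residuals `r` and directions `p`, with step lengths `α` and momentum
coefficients `β`, of the conjugate gradient iteration for the operator `A` in the geometry of the
form `C`. The iterates are left out, as they do not enter the recurrences. After a residual vanishes
all later terms are `0`, because of `x / 0 = 0`. -/
structure IsConjugateGradient_s17 (C : BilinForm K E) (A : Module.End K E) (r p : ℕ → E)
    (α β : ℕ → K) : Prop where
  dir_zero : p 0 = r 0
  step_eq (k : ℕ) : α k = C (r k) (r k) / C (p k) (A (p k))
  res_succ (k : ℕ) : r (k + 1) = r k - α k • A (p k)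
  momentum_eq (k : ℕ) : β k = C (r (k + 1)) (r (k + 1)) / C (r k) (r k)
  dir_succ (k : ℕ) : p (k + 1) = r (k + 1) + β k • p k

namespace IsConjugateGradient_s17

variable {C : BilinForm K E} {A : Module.End K E} {r p : ℕ → E} {α β : ℕ → K} {k : ℕ}

lemma dir_eq_zero (h : IsConjugateGradient_s17 C A r p α β) (hr : r k = 0) : p k = 0 := by
  cases k with
  | zero => rw [h.dir_zero, hr]
  | succ k => simp [h.dir_succ, h.momentum_eq, hr]

lemma map_res_eq_zero (h : IsConjugateGradient_s17 C A r p α β) {φ : Module.Dual K E}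
    (hφ : ∀ j < k, φ (p j) = 0) : ∀ i < k, φ (r i) = 0 := by
  rintro (_ | i) hi
  · rw [← h.dir_zero, hφ 0 hi]
  · have hr : r (i + 1) = p (i + 1) - β i • p i := by rw [h.dir_succ, add_sub_cancel_right]
    rw [hr, map_sub, map_smul, hφ _ hi, hφ i (by omega), smul_zero, sub_zero]

lemma res_dir_self (h : IsConjugateGradient_s17 C A r p α β)
    (horth : ∀ j < k, C (r k) (p j) = 0) : C (r k) (p k) = C (r k) (r k) := by
  cases k with
  | zero => rw [h.dir_zero]
  | succ k => rw [h.dir_succ, map_add, map_smul, horth k k.lt_succ_self, smul_zero, add_zero]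

variable [LinearOrder K]

lemma step_ne_zero (h : IsConjugateGradient_s17 C A r p α β) (hC : C.toQuadraticMap.PosDef)
    (hCA : (C.compRight A).toQuadraticMap.PosDef) (hp : p k ≠ 0) : α k ≠ 0 := by
  rw [h.step_eq]
  exact div_ne_zero (hC (r k) (mt h.dir_eq_zero hp)).ne' (hCA (p k) hp).ne'

lemma step_mul_dir_self (h : IsConjugateGradient_s17 C A r p α β)
    (hCA : (C.compRight A).toQuadraticMap.PosDef) (horth : ∀ j < k, C (r k) (p j) = 0) :
    α k * C (p k) (A (p k)) = C (r k) (r k) := by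
  by_cases hp : p k = 0
  · simp [← h.res_dir_self horth, hp]
  · rw [h.step_eq]
    exact div_mul_cancel₀ _ (hCA (p k) hp).ne'

lemma orthogonal_succ (h : IsConjugateGradient_s17 C A r p α β) (hA : C.IsSelfAdjoint A)
    (hCA : (C.compRight A).toQuadraticMap.PosDef) (horth : ∀ j < k, C (r k) (p j) = 0)
    (hconj : ∀ j < k, C (p k) (A (p j)) = 0) : ∀ j < k + 1, C (r (k + 1)) (p j) = 0 := by
  intro j hj
  have hexpand : C (r (k + 1)) (p j) = C (r k) (p j) - α k * C (p k) (A (p j)) := by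
    simp [h.res_succ, hA (p k) (p j)]
  rcases Nat.lt_succ_iff_lt_or_eq.mp hj with hjk | rfl
  · rw [hexpand, horth j hjk, hconj j hjk, mul_zero, sub_zero]
  · rw [hexpand, h.step_mul_dir_self hCA horth, h.res_dir_self horth, sub_self]

lemma conjugate_succ (h : IsConjugateGradient_s17 C A r p α β) (hC : C.toQuadraticMap.PosDef)
    (hCA : (C.compRight A).toQuadraticMap.PosDef) (horth : ∀ j < k, C (r k) (p j) = 0)
    (horth' : ∀ j < k + 1, C (r (k + 1)) (p j) = 0) (hconj : ∀ j < k, C (p k) (A (p j)) = 0) :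
    ∀ j < k + 1, C (p (k + 1)) (A (p j)) = 0 := by
  intro j hj
  by_cases hp : p j = 0
  · simp [hp]
  refine (mul_eq_zero.mp ?_).resolve_left (h.step_ne_zero hC hCA hp)
  have hres : C (r (k + 1)) (r j) = 0 := h.map_res_eq_zero horth' j hj
  have hstep : α j * C (r (k + 1)) (A (p j)) = -C (r (k + 1)) (r (j + 1)) := by
    simp [h.res_succ j, hres]
  have hexpand : α j * C (p (k + 1)) (A (p j)) =
      -C (r (k + 1)) (r (j + 1)) + β k * (α j * C (p k) (A (p j))) := by
    rw [← hstep, h.dir_succ, map_add, map_smul, LinearMap.add_apply, LinearMap.smul_apply,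
      smul_eq_mul]
    ring
  rcases Nat.lt_succ_iff_lt_or_eq.mp hj with hjk | rfl
  · rw [hexpand, h.map_res_eq_zero horth' (j + 1) (by omega), hconj j hjk]
    ring
  · have hρ : C (r j) (r j) ≠ 0 := (hC (r j) (mt h.dir_eq_zero hp)).ne'
    rw [hexpand, h.step_mul_dir_self hCA horth, h.momentum_eq, div_mul_cancel₀ _ hρ,
      neg_add_cancel]

theorem orthogonal_and_conjugate_s17 (h : IsConjugateGradient_s17 C A r p α β) (hA : C.IsSelfAdjoint A)
    (hC : C.toQuadraticMap.PosDef) (hCA : (C.compRight A).toQuadraticMap.PosDef) (k : ℕ) :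
    (∀ j < k, C (r k) (p j) = 0) ∧ ∀ j < k, C (p k) (A (p j)) = 0 := by
  induction k with
  | zero => simp
  | succ k ih =>
    obtain ⟨horth, hconj⟩ := ih
    have horth' := h.orthogonal_succ hA hCA horth hconj
    exact ⟨horth', h.conjugate_succ hC hCA horth horth' hconj⟩

variable [IsStrictOrderedRing K] {ℓ : ℕ}

lemma step_nonneg (h : IsConjugateGradient_s17 C A r p α β) (hC : C.toQuadraticMap.PosDef)
    (hCA : (C.compRight A).toQuadraticMap.PosDef) (k : ℕ) : 0 ≤ α k := by
  rw [h.step_eq]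
  exact div_nonneg (hC.nonneg (r k)) (hCA.nonneg (p k))

lemma momentum_nonneg (h : IsConjugateGradient_s17 C A r p α β) (hC : C.toQuadraticMap.PosDef)
    (k : ℕ) : 0 ≤ β k := by
  rw [h.momentum_eq]
  exact div_nonneg (hC.nonneg (r (k + 1))) (hC.nonneg (r k))

theorem res_dir_nonneg (h : IsConjugateGradient_s17 C A r p α β) (hsymm : C.IsSymm)
    (hA : C.IsSelfAdjoint A) (hC : C.toQuadraticMap.PosDef)
    (hCA : (C.compRight A).toQuadraticMap.PosDef) (i j : ℕ) : 0 ≤ C (r i) (p j) := by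
  have horth (k : ℕ) := (h.orthogonal_and_conjugate_s17 hA hC hCA k).1
  rcases lt_or_ge j i with hji | hij
  · exact (horth i j hji).ge
  induction j, hij using Nat.le_induction with
  | base =>
    rw [h.res_dir_self (horth i)]
    exact hC.nonneg (r i)
  | succ j hij ih =>
    have hres : C (r i) (r (j + 1)) = 0 := by
      rw [hsymm.eq, h.map_res_eq_zero (horth (j + 1)) i (by omega)]
    rw [h.dir_succ, map_add, map_smul, hres, zero_add]
    exact mul_nonneg (h.momentum_nonneg hC j) ih

lemma map_dir_nonneg (h : IsConjugateGradient_s17 C A r p α β) (hC : C.toQuadraticMap.PosDef)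
    {φ : Module.Dual K E} (hφ : ∀ i ≤ ℓ, 0 ≤ φ (r i)) : ∀ i ≤ ℓ, 0 ≤ φ (p i) := by
  intro i hi
  induction i with
  | zero => rw [h.dir_zero]; exact hφ 0 hi
  | succ i ih =>
    rw [h.dir_succ, map_add, map_smul]
    exact add_nonneg (hφ _ hi) (mul_nonneg (h.momentum_nonneg hC i) (ih (by omega)))

lemma map_res_nonneg_of_map_dir (h : IsConjugateGradient_s17 C A r p α β)
    (hC : C.toQuadraticMap.PosDef) (hCA : (C.compRight A).toQuadraticMap.PosDef) (hℓ : r ℓ = 0)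
    {φ : Module.Dual K E} (hφ : ∀ i ≤ ℓ, 0 ≤ φ (A (p i))) : ∀ i ≤ ℓ, 0 ≤ φ (r i) := by
  intro i hi
  induction hi using Nat.decreasingInduction with
  | self => rw [hℓ, map_zero]
  | of_succ i hi ih =>
    have hr : r i = r (i + 1) + α i • A (p i) := by rw [h.res_succ, sub_add_cancel]
    rw [hr, map_add, map_smul]
    exact add_nonneg ih (mul_nonneg (h.step_nonneg hC hCA i) (hφ i hi.le))

theorem map_res_nonneg_of_map_pow (h : IsConjugateGradient_s17 C A r p α β)
    (hC : C.toQuadraticMap.PosDef) (hCA : (C.compRight A).toQuadraticMap.PosDef) (hℓ : r ℓ = 0)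
    (d : ℕ) {φ : Module.Dual K E} (hφ : ∀ i ≤ ℓ, 0 ≤ φ ((A ^ d) (r i))) :
    ∀ i ≤ ℓ, 0 ≤ φ (r i) := by
  induction d generalizing φ with
  | zero => simpa using hφ
  | succ d ih =>
    have hφA : ∀ i ≤ ℓ, 0 ≤ (φ ∘ₗ A) (r i) := ih (by
      simpa only [pow_succ', Module.End.mul_apply, LinearMap.comp_apply] using hφ)
    exact h.map_res_nonneg_of_map_dir hC hCA hℓ (h.map_dir_nonneg hC hφA)

end IsConjugateGradient_s17

theorem car_rAp_nonneg_general [LinearOrder K] [IsStrictOrderedRing K] {B : BilinForm K E}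
    {A : Module.End K E} {r p : ℕ → E} {α β : ℕ → K} {m s ℓ : ℕ} (hB : B.IsSymm)
    (hA : B.IsSelfAdjoint A)
    (hpos : (B.compRight (A ^ m)).toQuadraticMap.PosDef)
    (hpos' : (B.compRight (A ^ (m + 1))).toQuadraticMap.PosDef)
    (h : IsConjugateGradient_s17 (B.compRight (A ^ m)) A r p α β)
    (_hne : ∀ k < ℓ, r k ≠ 0) (hℓ : r ℓ = 0) (hs : s ≤ m) :
    ∀ i ≤ ℓ, ∀ j ≤ ℓ, 0 ≤ B (r i) ((A ^ s) (p j)) := by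
  intro i hi j _
  have hposA : ((B.compRight (A ^ m)).compRight A).toQuadraticMap.PosDef := hpos'
  refine h.map_res_nonneg_of_map_pow hpos hposA hℓ (m - s) (φ := B.flip ((A ^ s) (p j)))
    (fun i _ => ?_) i hi
  have hshift : B ((A ^ (m - s)) (r i)) ((A ^ s) (p j)) = B (r i) ((A ^ m) (p j)) := by
    rw [isSelfAdjoint_pow hA, ← Module.End.mul_apply, ← pow_add, Nat.sub_add_cancel hs]
  rw [BilinForm.flip_apply, hshift]
  exact h.res_dir_nonneg (isSymm_compRight hB (isSelfAdjoint_pow hA m))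
    (isSelfAdjoint_compRight_pow hA m) hpos hposA i j

end ConjugateGradient

section Matrix

variable {ι K : Type*} [Fintype ι] [Field K]

lemma isSymm_dotProductBilin : BilinForm.IsSymm (dotProductBilin K K : BilinForm K (ι → K)) :=
  ⟨dotProduct_comm⟩

variable [DecidableEq ι]

lemma isSelfAdjoint_dotProductBilin {A : Matrix ι ι K} (hA : A.IsSymm) :
    (dotProductBilin K K : BilinForm K (ι → K)).IsSelfAdjoint (toLin' A) := fun u v => by
  change A *ᵥ u ⬝ᵥ v = u ⬝ᵥ A *ᵥ v
  rw [dotProduct_mulVec, ← mulVec_transpose, hA.eq]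

lemma posDef_dotProductBilin_compRight_pow {A : Matrix ι ι ℝ} (hA : A.PosDef) (m : ℕ) :
    (BilinForm.compRight (dotProductBilin ℝ ℝ) (toLin' A ^ m)).toQuadraticMap.PosDef := by
  intro u hu
  have hpow : (A ^ m).PosDef := (hA.posSemidef.pow m).posDef_iff_isUnit.mpr (hA.isUnit.pow m)
  simpa [← toLin'_pow] using hpow.dotProduct_mulVec_pos hu

lemma isConjugateGradient_of_car {A : Matrix ι ι K} (hA : A.IsSymm) {r p : ℕ → ι → K}
    {ρ α β : ℕ → K} (hp0 : p 0 = r 0) (hρ : ∀ k, ρ k = r k ⬝ᵥ (A ^ 3).mulVec (r k))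
    (hα : ∀ k, α k = ρ k / ((A ^ 2).mulVec (p k) ⬝ᵥ (A ^ 2).mulVec (p k)))
    (hr : ∀ k, r (k + 1) = r k - α k • A.mulVec (p k))
    (hβ : ∀ k, β k = ρ (k + 1) / ρ k) (hp : ∀ k, p (k + 1) = r (k + 1) + β k • p k) :
    IsConjugateGradient_s17 (BilinForm.compRight (dotProductBilin K K) (toLin' A ^ 3))
      (toLin' A) r p α β where
  dir_zero := hp0
  step_eq k := by
    have hnorm : A ^ 2 *ᵥ p k ⬝ᵥ A ^ 2 *ᵥ p k = p k ⬝ᵥ A ^ 3 *ᵥ A *ᵥ p k :=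
      calc A ^ 2 *ᵥ p k ⬝ᵥ A ^ 2 *ᵥ p k = p k ⬝ᵥ A ^ 2 *ᵥ A ^ 2 *ᵥ p k :=
            isSelfAdjoint_dotProductBilin (hA.pow 2) (p k) (A ^ 2 *ᵥ p k)
        _ = p k ⬝ᵥ A ^ 3 *ᵥ A *ᵥ p k := by
            rw [mulVec_mulVec, mulVec_mulVec, ← pow_add, ← pow_succ]
    simp [hα, hρ, hnorm, ← toLin'_pow]
  res_succ := hr
  momentum_eq k := by simp [hβ, hρ, ← toLin'_pow]
  dir_succ := hp

end Matrix

/-- Paper: Theorem 6.3(k).  cAr iteration for SPD `A` (with `ρ_k = r_kᵀA³r_k`,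
`α_k = ρ_k/‖A²p_k‖²`, `β_k = ρ_{k+1}/ρ_k`), terminating at step `ℓ ≤ n`
(`r_k ≠ 0` for `k < ℓ` and `r_ℓ = 0`):  the residuals and directions satisfy `r_iᵀ A p_j ≥ 0`. -/
theorem car_rAp_nonneg (n ℓ : ℕ) (hℓn : ℓ ≤ n)
    (A : Matrix (Fin n) (Fin n) ℝ) (hA : A.PosDef) (b : Fin n → ℝ)
    (x r p : ℕ → (Fin n → ℝ)) (ρ α β : ℕ → ℝ)
    (hx0 : x 0 = 0) (hr0 : r 0 = b) (hp0 : p 0 = b)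
    (hρ : ∀ k, ρ k = r k ⬝ᵥ (A ^ 3).mulVec (r k))
    (hα : ∀ k, α k = ρ k / ((A ^ 2).mulVec (p k) ⬝ᵥ (A ^ 2).mulVec (p k)))
    (hx : ∀ k, x (k + 1) = x k + α k • p k)
    (hr : ∀ k, r (k + 1) = r k - α k • A.mulVec (p k))
    (hβ : ∀ k, β k = ρ (k + 1) / ρ k)
    (hp : ∀ k, p (k + 1) = r (k + 1) + β k • p k)
    (hne : ∀ k < ℓ, r k ≠ 0) (hfin : r ℓ = 0) :
    ∀ i ≤ ℓ, ∀ j ≤ ℓ, 0 ≤ r i ⬝ᵥ A.mulVec (p j) := by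
  have hsymm : A.IsSymm := isHermitian_iff_isSymm.mp hA.isHermitian
  have hcg := isConjugateGradient_of_car hsymm (hp0.trans hr0.symm) hρ hα hr hβ hp
  simpa using car_rAp_nonneg_general (s := 1) isSymm_dotProductBilin
    (isSelfAdjoint_dotProductBilin hsymm) (posDef_dotProductBilin_compRight_pow hA 3)
    (posDef_dotProductBilin_compRight_pow hA 4) hcg hne hfin (by norm_num)
end
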